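/- arXiv:2503.12275 — 2 statements merged into one kernel-verified Lean document; each statement's English description precedes it below -/
import Mathlib

section
/- Let n, d, s be positive integers with d ≤ n, let f_1,…,f_s ∈ ℝ[X_1,…,X_n] be symmetric polynomials of total degree at most d, and let S = {x ∈ ℝⁿ : f_1(x) ≥ 0, …, f_s(x) ≥ 0}. If x ∈ S ∩ W_c and z ∈ W_c satisfy p_j(z) = p_j(x) for all j = 1,…,d, then x and z lie in the same connected component of S. -/
open MvPolynomial in
lemma cps_esymm_isHom (n k : ℕ) : (esymm (Fin n) ℝ k).IsHomogeneous k := by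
  rw [esymm]
  refine MvPolynomial.IsHomogeneous.sum _ _ _ fun s hs => ?_
  have := MvPolynomial.IsHomogeneous.prod s (fun i => (X i : MvPolynomial (Fin n) ℝ)) (fun _ => 1)
    (fun i _ => isHomogeneous_X _ _)
  simpa [(Finset.mem_powersetCard.mp hs).2] using this

open MvPolynomial in
lemma cps_symm_eval (n d : ℕ) (f : MvPolynomial (Fin n) ℝ) (hf : f.IsSymmetric)
    (hd : f.totalDegree ≤ d) (x y : Fin n → ℝ)
    (h : ∀ k, 1 ≤ k → k ≤ d → eval x (esymm (Fin n) ℝ k) = eval y (esymm (Fin n) ℝ k)) :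
    eval x f = eval y f := by
  obtain ⟨g, hg⟩ := (esymmAlgHom_fin_bijective ℝ n).2 ⟨f, hf⟩
  have hg' : aeval (fun i : Fin n ↦ esymm (Fin n) ℝ (i + 1)) g = f := by
    rw [← esymmAlgHom_apply, hg]
  have hinj : ∀ q : MvPolynomial (Fin n) ℝ,
      aeval (fun i : Fin n ↦ esymm (Fin n) ℝ (i + 1)) q = 0 → q = 0 := by
    intro q hq
    rw [← esymmAlgHom_apply] at hq
    apply (esymmAlgHom_fin_bijective ℝ n).1
    rw [map_zero]
    exact Subtype.ext hq
  let wt : (Fin n →₀ ℕ) → ℕ := fun t => ∑ i, (i.val + 1) * t i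
  have hmon : ∀ (t : Fin n →₀ ℕ) (c : ℝ),
      (aeval (fun i : Fin n ↦ esymm (Fin n) ℝ (i + 1)) (monomial t c)).IsHomogeneous (wt t) := by
    intro t c
    rw [aeval_monomial, Finsupp.prod_fintype _ _ (by simp)]
    have h1 := MvPolynomial.IsHomogeneous.prod Finset.univ
      (fun i : Fin n => (esymm (Fin n) ℝ (i + 1)) ^ t i) (fun i => (i.val + 1) * t i)
      (fun i _ => (cps_esymm_isHom n (i+1)).pow _)
    have h2 := (isHomogeneous_C (Fin n) c).mul h1
    simpa [wt] using h2
  have hsupp : ∀ t ∈ g.support, wt t ≤ d := by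
    intro t ht
    by_contra hlt
    push Not at hlt
    have h0 : homogeneousComponent (wt t) f = 0 :=
      homogeneousComponent_eq_zero _ _ (lt_of_le_of_lt hd hlt)
    have h1 : homogeneousComponent (wt t) f =
        aeval (fun i : Fin n ↦ esymm (Fin n) ℝ (i + 1))
          (∑ u ∈ g.support with wt u = wt t, monomial u (coeff u g)) := by
      rw [← hg']
      conv_lhs => rw [g.as_sum]
      rw [map_sum, map_sum, map_sum, Finset.sum_filter]
      refine Finset.sum_congr rfl fun u hu => ?_
      rw [homogeneousComponent_of_mem (hmon u _)]
      simp only [eq_comm]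
    rw [h1] at h0
    have h2 := hinj _ h0
    have h3 := congrArg (coeff t) h2
    rw [coeff_sum] at h3
    simp only [coeff_monomial, coeff_zero] at h3
    rw [Finset.sum_ite_eq' ] at h3
    simp only [Finset.mem_filter, ht, true_and, if_true] at h3
    exact (mem_support_iff.mp ht) h3
  have hev : ∀ w : Fin n → ℝ, eval w f = ∑ t ∈ g.support, coeff t g *
      ∏ i : Fin n, (eval w (esymm (Fin n) ℝ (i.val+1))) ^ t i := by
    intro w
    rw [← hg']
    conv_lhs => rw [g.as_sum]
    rw [map_sum, map_sum]
    refine Finset.sum_congr rfl fun u hu => ?_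
    rw [aeval_monomial, Finsupp.prod_fintype _ _ (by simp)]
    simp
  rw [hev, hev]
  refine Finset.sum_congr rfl fun t ht => ?_
  congr 1
  refine Finset.prod_congr rfl fun i _ => ?_
  by_cases hi : t i = 0
  · simp [hi]
  · rw [h (i+1) (by omega)]
    have h1 : (i.val + 1) * t i ≤ wt t :=
      Finset.single_le_sum (f := fun i : Fin n => (i.val + 1) * t i) (by simp) (Finset.mem_univ i)
    have h2 := hsupp t ht
    have : 1 ≤ t i := by omega
    nlinarith

open MvPolynomial in
lemma cps_esymm_of_psum (n d : ℕ) (x y : Fin n → ℝ)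
    (h : ∀ k, 1 ≤ k → k ≤ d → ∑ i, x i ^ k = ∑ i, y i ^ k) :
    ∀ k, k ≤ d → eval x (esymm (Fin n) ℝ k) = eval y (esymm (Fin n) ℝ k) := by
  intro k
  induction k using Nat.strong_induction_on with
  | _ k ih =>
    intro hk
    rcases Nat.eq_zero_or_pos k with rfl | hpos
    · simp
    have hx := congrArg (eval x) (mul_esymm_eq_sum (Fin n) ℝ k)
    have hy := congrArg (eval y) (mul_esymm_eq_sum (Fin n) ℝ k)
    have hk0 : (k : ℝ) ≠ 0 := by exact_mod_cast hpos.ne'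
    apply mul_left_cancel₀ hk0
    simp only [map_mul, map_natCast, map_pow, map_neg, map_one, map_sum, psum, eval_X] at hx hy
    rw [hx, hy]
    congr 1
    refine Finset.sum_congr rfl fun a ha => ?_
    simp only [Finset.mem_filter, Finset.HasAntidiagonal.mem_antidiagonal] at ha
    rw [ih a.1 (by omega) (by omega), h a.2 (by omega) (by omega)]

open MvPolynomial in
lemma cps_psum_of_esymm (n : ℕ) (x y : Fin n → ℝ) (d : ℕ)
    (h : ∀ k, k ≤ d → eval x (esymm (Fin n) ℝ k) = eval y (esymm (Fin n) ℝ k)) :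
    (∀ k, 1 ≤ k → k ≤ d → ∑ i, x i ^ k = ∑ i, y i ^ k) ∧
    (∑ i, x i ^ (d+1) - ∑ i, y i ^ (d+1) = (-1)^d * (d+1) *
      (eval x (esymm (Fin n) ℝ (d+1)) - eval y (esymm (Fin n) ℝ (d+1)))) := by
  have key : ∀ k, 1 ≤ k → k ≤ d + 1 → (∀ j, 1 ≤ j → j < k → ∑ i, x i ^ j = ∑ i, y i ^ j) →
      ∑ i, x i ^ k - ∑ i, y i ^ k = (-1)^(k+1) * k *
      (eval x (esymm (Fin n) ℝ k) - eval y (esymm (Fin n) ℝ k)) := by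
    intro k hpos hk ih
    have hx := congrArg (eval x) (psum_eq_mul_esymm_sub_sum (Fin n) ℝ k hpos)
    have hy := congrArg (eval y) (psum_eq_mul_esymm_sub_sum (Fin n) ℝ k hpos)
    simp only [map_mul, map_natCast, map_pow, map_neg, map_one, map_sub, map_sum, psum, eval_X]
      at hx hy
    rw [hx, hy]
    have : ∀ a b c e s : ℝ, s * k * a - b - (s * k * c - e) = s * k * (a - c) + (e - b) := by
      intros; ring
    rw [this, add_eq_left, sub_eq_zero]
    refine Finset.sum_congr rfl fun a ha => ?_
    simp only [Finset.mem_filter, Finset.HasAntidiagonal.mem_antidiagonal, Set.mem_Ioo] at ha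
    rw [h a.1 (by omega), ih a.2 (by omega) (by omega)]
  have h1 : ∀ k, 1 ≤ k → k ≤ d → ∑ i, x i ^ k = ∑ i, y i ^ k := by
    intro k
    induction k using Nat.strong_induction_on with
    | _ k ih =>
      intro hpos hk
      have := key k hpos (by omega) (fun j hj hjk => ih j hjk hj (by omega))
      rw [h k hk] at this
      linarith
  refine ⟨h1, ?_⟩
  rw [key (d+1) (by omega) le_rfl (fun j hj hjk => h1 j hj (by omega))]
  push_cast
  ring
lemma cps_alt {n : ℕ} (x y : Fin n → ℝ) (hx : Monotone x) (hy : Monotone y) :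
    ∀ (L m : ℕ) (σ : ℝ), (σ = 1 ∨ σ = -1) → ∀ C : ℝ,
    (∀ i : Fin n, i.val < m → x i ≤ C ∧ y i ≤ C) →
    (∃ s : ℕ → Fin n, (∀ j ≤ L, (s j).val < m ∧ (-1)^j * (σ * (y (s j) - x (s j))) < 0) ∧
      ∀ j < L, s (j+1) < s j) ∨
    (∃ c : Multiset ℝ, c.card ≤ L ∧ (∀ a ∈ c, a ≤ C) ∧ ∀ i : Fin n, i.val < m → ∀ t,
      min (x i) (y i) ≤ t → t ≤ max (x i) (y i) →
      0 ≤ σ * (y i - x i) * (c.map (fun a => t - a)).prod) := by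
  intro L
  induction L with
  | zero =>
    intro m σ hσ C hC
    by_cases h : ∃ i : Fin n, i.val < m ∧ σ * (y i - x i) < 0
    · obtain ⟨i, hi, h⟩ := h
      left
      refine ⟨fun _ => i, fun j hj => ⟨hi, ?_⟩, by simp⟩
      obtain rfl : j = 0 := by omega
      simpa using h
    · right
      push Not at h
      exact ⟨0, by simp, by simp, fun i hi t _ _ => by simpa using h i hi⟩
  | succ L ih =>
    intro m σ hσ C hC
    by_cases h : ∃ i : Fin n, i.val < m ∧ σ * (y i - x i) < 0
    · obtain ⟨i0, hi0, hmax⟩ : ∃ i0 : Fin n, (i0.val < m ∧ σ * (y i0 - x i0) < 0) ∧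
          ∀ i : Fin n, i.val < m → i0 < i → 0 ≤ σ * (y i - x i) := by
        classical
        obtain ⟨i, hi⟩ := h
        obtain ⟨i0, h0, h1⟩ := Finset.exists_max_image
          (Finset.univ.filter fun i : Fin n => i.val < m ∧ σ * (y i - x i) < 0) id
          ⟨i, by simpa using hi⟩
        refine ⟨i0, by simpa using h0, fun k hk hlt => ?_⟩
        by_contra hneg
        push Not at hneg
        have := h1 k (by simp [hk, hneg])
        exact absurd hlt (not_lt.mpr this)
      have hle : ∀ i : Fin n, i.val < i0.val + 1 → x i ≤ max (x i0) (y i0) ∧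
          y i ≤ max (x i0) (y i0) := by
        intro i hi
        have : i ≤ i0 := by rw [Fin.le_def]; omega
        exact ⟨(hx this).trans (le_max_left _ _), (hy this).trans (le_max_right _ _)⟩
      rcases ih (i0.val + 1) (-σ) (by rcases hσ with rfl | rfl <;> simp) (max (x i0) (y i0)) hle with
        ⟨s, hs, hs'⟩ | ⟨c, hc1, hc2, hc3⟩
      · left
        refine ⟨fun j => Nat.casesOn j i0 s, ?_, ?_⟩
        · intro j hj
          cases j with
          | zero => simpa using hi0
          | succ j =>
            have := hs j (by omega)
            refine ⟨by simp only; omega, ?_⟩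
            simp only
            rw [pow_succ]
            linarith [this.2]
        · intro j hj
          cases j with
          | zero =>
            change s 0 < i0
            have h1 := hs 0 (by omega)
            have h2 : s 0 ≠ i0 := by
              intro he
              rw [he] at h1
              have := h1.2
              simp only [pow_zero, one_mul] at this
              linarith [hi0.2]
            refine lt_of_le_of_ne ?_ h2
            rw [Fin.le_def]; omega
          | succ j => exact hs' j (by omega)
      · right
        set c0 := max (x i0) (y i0) with hc0
        refine ⟨c0 ::ₘ c, by simpa using hc1, ?_, ?_⟩
        · have h0 : c0 ≤ C := max_le (hC i0 hi0.1).1 (hC i0 hi0.1).2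
          intro a ha
          rcases Multiset.mem_cons.mp ha with rfl | ha
          · exact h0
          · exact (hc2 a ha).trans h0
        · intro i hi t ht1 ht2
          rw [Multiset.map_cons, Multiset.prod_cons]
          by_cases hle' : i ≤ i0
          · have h1 := hc3 i (by rw [Fin.le_def] at hle'; omega) t ht1 ht2
            have h2 : t ≤ c0 := ht2.trans (max_le (hle i (by rw [Fin.le_def] at hle'; omega)).1
              (hle i (by rw [Fin.le_def] at hle'; omega)).2)
            nlinarith
          · push Not at hle'
            have h1 := hmax i hi hle'
            have hxx := hx hle'.le
            have hyy := hy hle'.le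
            rcases eq_or_lt_of_le h1 with h1 | h1
            · rw [← h1]; simp
            have h2 : c0 ≤ t := by
              have h3 := hi0.2
              rcases hσ with rfl | rfl
              · rw [hc0, max_eq_left (by linarith)]
                rw [min_eq_left (by linarith)] at ht1
                linarith
              · rw [hc0, max_eq_right (by linarith)]
                rw [min_eq_right (by linarith)] at ht1
                linarith
            have h4 : 0 ≤ (c.map (fun a => t - a)).prod := by
              apply Multiset.prod_nonneg
              intro b hb
              obtain ⟨a, ha, rfl⟩ := Multiset.mem_map.mp hb
              linarith [hc2 a ha]
            have : 0 ≤ t - c0 := by linarith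
            positivity
    · right
      push Not at h
      exact ⟨0, by simp, by simp, fun i hi t _ _ => by simpa using h i hi⟩

open Polynomial in
lemma cps_integral_sum {n d : ℕ} (x y : Fin n → ℝ) (g : ℝ[X]) (hg : g.Monic) (hgd : g.natDegree ≤ d)
    (h : ∀ k, 1 ≤ k → k ≤ d → ∑ i, y i ^ k = ∑ i, x i ^ k)
    (h' : ∑ i, y i ^ (d+1) ≤ ∑ i, x i ^ (d+1)) :
    ∑ i, ∫ t in (x i)..(y i), g.eval t ≤ 0 := by
  have h1 : ∀ i, ∫ t in (x i)..(y i), g.eval t =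
      ∑ k ∈ Finset.range (g.natDegree + 1), g.coeff k * ((y i ^ (k+1) - x i ^ (k+1)) / (k+1)) := by
    intro i
    simp_rw [eval_eq_sum_range]
    rw [intervalIntegral.integral_finsetSum]
    · refine Finset.sum_congr rfl fun k _ => ?_
      rw [intervalIntegral.integral_const_mul, integral_pow]
    · intro k _
      exact (by fun_prop : Continuous fun t : ℝ => g.coeff k * t ^ k).intervalIntegrable _ _
  simp_rw [h1]
  rw [Finset.sum_comm]
  apply Finset.sum_nonpos
  intro k hk
  rw [← Finset.mul_sum, ← Finset.sum_div, Finset.sum_sub_distrib]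
  have hk' : k ≤ g.natDegree := by simpa [Nat.lt_succ_iff] using hk
  rcases Nat.lt_or_ge k d with hkd | hkd
  · rw [h (k+1) (by omega) (by omega)]; simp
  · obtain rfl : k = d := by omega
    have : g.natDegree = k := by omega
    have hc : g.coeff k = 1 := by rw [← this]; exact hg
    rw [hc, one_mul]
    apply div_nonpos_of_nonpos_of_nonneg
    · linarith
    · positivity

open Polynomial in
lemma cps_seq {n d : ℕ} (x y : Fin n → ℝ) (hx : Monotone x) (hy : Monotone y) (hne : x ≠ y)
    (h : ∀ k, 1 ≤ k → k ≤ d → ∑ i, y i ^ k = ∑ i, x i ^ k)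
    (h' : ∑ i, y i ^ (d+1) ≤ ∑ i, x i ^ (d+1)) :
    ∃ s : ℕ → Fin n, (∀ j ≤ d, (-1)^j * (y (s j) - x (s j)) < 0) ∧ ∀ j < d, s (j+1) < s j := by
  have hC : ∃ C : ℝ, ∀ i : Fin n, i.val < n → x i ≤ C ∧ y i ≤ C := by
    refine ⟨∑ i, (|x i| + |y i|), fun i _ => ?_⟩
    have := Finset.single_le_sum (f := fun i => |x i| + |y i|) (fun i _ => by positivity)
      (Finset.mem_univ i)
    constructor
    · linarith [le_abs_self (x i), abs_nonneg (y i)]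
    · linarith [le_abs_self (y i), abs_nonneg (x i)]
  obtain ⟨C', hC⟩ := hC
  rcases cps_alt x y hx hy d n 1 (Or.inl rfl) C' hC with ⟨s, hs, hs'⟩ | ⟨c, hc1, hc2, hc3⟩
  · exact ⟨s, fun j hj => by simpa using (hs j hj).2, hs'⟩
  · exfalso
    set g : ℝ[X] := (c.map (fun a => X - C a)).prod with hgdef
    have hgm : g.Monic := monic_multisetProd_X_sub_C c
    have hgd : g.natDegree ≤ d := by
      rw [hgdef, natDegree_multiset_prod_X_sub_C_eq_card]; exact hc1
    have hev : ∀ t, g.eval t = (c.map (fun a => t - a)).prod := by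
      intro t
      rw [hgdef, eval_multiset_prod, Multiset.map_map]
      simp
    have hle := cps_integral_sum x y g hgm hgd h h'
    have hpt : ∀ i t, min (x i) (y i) ≤ t → t ≤ max (x i) (y i) → 0 ≤ (y i - x i) * g.eval t := by
      intro i t h1 h2
      rw [hev]; simpa using hc3 i i.2 t h1 h2
    have hnz : ∀ a b : ℝ, a < b → ∃ t ∈ Set.Icc a b, g.eval t ≠ 0 := by
      intro a b hab
      by_contra hcon
      push Not at hcon
      apply hgm.ne_zero
      apply Polynomial.eq_zero_of_infinite_isRoot
      exact (Set.Icc_infinite hab).mono fun t ht => hcon t ht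
    have hpos : ∀ i, x i ≠ y i → 0 < ∫ t in (x i)..(y i), g.eval t := by
      intro i hi
      rcases lt_or_gt_of_ne hi with hlt | hlt
      · have hnn : ∀ t ∈ Set.Icc (x i) (y i), 0 ≤ g.eval t := by
          intro t ht
          have := hpt i t (by rw [min_eq_left hlt.le]; exact ht.1)
            (by rw [max_eq_right hlt.le]; exact ht.2)
          exact nonneg_of_mul_nonneg_right this (by linarith)
        obtain ⟨t, ht, htne⟩ := hnz _ _ hlt
        exact intervalIntegral.integral_pos hlt g.continuous.continuousOn
          (fun t ht => hnn t ⟨ht.1.le, ht.2⟩) ⟨t, ht, lt_of_le_of_ne (hnn t ht) htne.symm⟩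
      · have hnn : ∀ t ∈ Set.Icc (y i) (x i), 0 ≤ - g.eval t := by
          intro t ht
          have := hpt i t (by rw [min_eq_right hlt.le]; exact ht.1)
            (by rw [max_eq_left hlt.le]; exact ht.2)
          have h3 : 0 < x i - y i := by linarith
          by_contra hcon
          push Not at hcon
          nlinarith
        obtain ⟨t, ht, htne⟩ := hnz _ _ hlt
        have := intervalIntegral.integral_pos hlt (f := fun t => - g.eval t)
          g.continuous.neg.continuousOn
          (fun t ht => hnn t ⟨ht.1.le, ht.2⟩)
          ⟨t, ht, lt_of_le_of_ne (hnn t ht) (neg_ne_zero.mpr htne).symm⟩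
        rw [intervalIntegral.integral_symm]
        rwa [intervalIntegral.integral_neg] at this
    have hnn : ∀ i ∈ Finset.univ, 0 ≤ ∫ t in (x i)..(y i), g.eval t := by
      intro i _
      by_cases hi : x i = y i
      · rw [hi]; simp
      · exact (hpos i hi).le
    obtain ⟨i, hi⟩ := Function.ne_iff.mp hne
    have := Finset.sum_pos' hnn ⟨i, Finset.mem_univ i, hpos i hi⟩
    linarith
open Polynomial in
lemma cps_splits (m : ℕ) (W : ℝ[X]) (hW : W.Monic) (hd : W.natDegree = m) (w : ℕ → ℝ)
    (hw : ∀ j, w (j+1) < w j) (hs : ∀ j ≤ m, 0 < (-1)^j * W.eval (w j)) :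
    ∃ r : ℕ → ℝ, W = ∏ j ∈ Finset.range m, (X - C (r j)) := by
  have hr : ∀ j, ∃ r, j < m → (w (j+1) < r ∧ r < w j ∧ W.eval r = 0) := by
    intro j
    by_cases hj : j < m
    · have h1 := hs j hj.le
      have h2 := hs (j+1) hj
      have hcont : ContinuousOn (fun t => (-1)^j * W.eval t) (Set.Icc (w (j+1)) (w j)) :=
        (continuous_const.mul W.continuous).continuousOn
      obtain ⟨r, hr, hr0⟩ := intermediate_value_Ioo (hw j).le hcont
        (show (0:ℝ) ∈ Set.Ioo _ _ from ⟨by rw [pow_succ] at h2; linarith, h1⟩)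
      refine ⟨r, fun _ => ⟨hr.1, hr.2, ?_⟩⟩
      have : ((-1:ℝ))^j ≠ 0 := pow_ne_zero _ (by norm_num)
      simpa [this] using hr0
    · exact ⟨0, fun h => absurd h hj⟩
  choose r hr using hr
  have hanti : StrictAnti w := strictAnti_nat_of_succ_lt hw
  have hlt : ∀ i j, i < j → j < m → r j < r i := by
    intro i j hij hj
    have h1 := hr i (by omega)
    have h2 := hr j hj
    have h3 := hanti.antitone (show i + 1 ≤ j from hij)
    linarith [h1.1, h2.2.1]
  have hinj : Set.InjOn r (Finset.range m : Set ℕ) := by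
    intro i hi j hj hij
    simp only [Finset.coe_range, Set.mem_Iio] at hi hj
    rcases lt_trichotomy i j with h | h | h
    · exact absurd hij (hlt i j h hj).ne'
    · exact h
    · exact absurd hij (hlt j i h hi).ne
  refine ⟨r, ?_⟩
  have hmon : (∏ j ∈ Finset.range m, (X - C (r j))).Monic := monic_prod_X_sub_C _ _
  have hdeg : (∏ j ∈ Finset.range m, (X - C (r j))).degree = (m : WithBot ℕ) := by
    rw [degree_prod]; simp
  have hWd : W.degree = (m : WithBot ℕ) := by rw [degree_eq_natDegree hW.ne_zero, hd]
  apply Polynomial.eq_of_degree_sub_lt_of_eval_finset_eq ((Finset.range m).image r)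
  · rw [Finset.card_image_of_injOn hinj, Finset.card_range]
    refine lt_of_lt_of_le (degree_sub_lt_left (hWd.trans hdeg.symm) hW.ne_zero ?_) hWd.le
    rw [hW, hmon]
  · intro a ha
    obtain ⟨j, hj, rfl⟩ := Finset.mem_image.mp ha
    rw [(hr j (Finset.mem_range.mp hj)).2.2, eval_prod]
    symm
    apply Finset.prod_eq_zero hj
    simp

open Polynomial Filter Topology in
lemma cps_perturb (d : ℕ) (u : ℕ → ℝ) (h1 : ∀ j, u (2*j+1) < u (2*j))
    (h2 : ∀ j, u (2*j+2) ≤ u (2*j+1)) :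
    ∀ᶠ ε : ℝ in 𝓝[>] 0, ∃ r : ℕ → ℝ,
      (∏ j ∈ Finset.range (d+1), (X - C (u j))) + C ε =
      ∏ j ∈ Finset.range (d+1), (X - C (r j)) := by
  set U : ℝ[X] := ∏ j ∈ Finset.range (d+1), (X - C (u j)) with hU
  have hUm : U.Monic := monic_prod_X_sub_C _ _
  have hUd : U.natDegree = d + 1 := by rw [hU, natDegree_finsetProd_X_sub_C_eq_card]; simp
  have hua : Antitone u := by
    apply antitone_nat_of_succ_le
    intro j
    rcases Nat.even_or_odd' j with ⟨k, rfl | rfl⟩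
    · exact (h1 k).le
    · exact h2 k
  let w : ℕ → ℝ := fun j => if j = 0 then u 0 else if Even j then u (j-1) else (u (j-1) + u j)/2
  have hw0 : w 0 = u 0 := by simp [w]
  have hwe : ∀ k, w (2*k+2) = u (2*k+1) := by
    intro k
    have : Even (2*k+2) := ⟨k+1, by ring⟩
    simp [w, this]
  have hwo : ∀ k, w (2*k+1) = (u (2*k) + u (2*k+1))/2 := by
    intro k
    simp [w]
  have hw : ∀ j, w (j+1) < w j := by
    intro j
    rcases Nat.even_or_odd' j with ⟨k, rfl | rfl⟩
    · rw [hwo]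
      rcases k with _ | k
      · have := h1 0
        simp only [mul_zero, zero_add] at this ⊢
        rw [hw0]; linarith
      · rw [show 2 * (k+1) = 2*k+2 by ring, hwe]
        have := h1 (k+1)
        have := h2 k
        rw [show 2 * (k+1) = 2*k+2 by ring] at *
        linarith
    · rw [hwo, show 2*k+1+1 = 2*k+2 by ring, hwe]
      linarith [h1 k]
  have hneg : ∀ k, 2*k ≤ d → U.eval (w (2*k+1)) < 0 := by
    intro k hk
    rw [hU, eval_prod, hwo]
    simp only [eval_sub, eval_X, eval_C]
    rw [← Finset.prod_range_mul_prod_Ico _ (show 2*k+1 ≤ d+1 by omega)]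
    apply mul_neg_of_neg_of_pos
    · have : ∏ j ∈ Finset.range (2*k+1), ((u (2*k) + u (2*k+1))/2 - u j) =
          (-1)^(2*k+1) * ∏ j ∈ Finset.range (2*k+1), (u j - (u (2*k) + u (2*k+1))/2) := by
        have h3 : ((-1:ℝ))^(2*k+1) = ∏ j ∈ Finset.range (2*k+1), (-1) := by simp
        rw [h3, ← Finset.prod_mul_distrib]
        exact Finset.prod_congr rfl fun _ _ => by ring
      rw [this, Odd.neg_one_pow ⟨k, rfl⟩]
      have : 0 < ∏ j ∈ Finset.range (2*k+1), (u j - (u (2*k) + u (2*k+1))/2) := by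
        apply Finset.prod_pos
        intro j hj
        have := hua (show j ≤ 2*k by have := Finset.mem_range.mp hj; omega)
        linarith [h1 k]
      linarith
    · apply Finset.prod_pos
      intro j hj
      have := hua (show 2*k+1 ≤ j by have := Finset.mem_Ico.mp hj; omega)
      linarith [h1 k]
  have hev : ∀ᶠ ε : ℝ in 𝓝[>] 0, ∀ k ∈ Finset.range (d+1), 2*k ≤ d → U.eval (w (2*k+1)) + ε < 0 := by
    rw [Filter.eventually_all_finset]
    intro k _
    by_cases hk : 2*k ≤ d
    · have := hneg k hk
      have h3 : ∀ᶠ ε : ℝ in 𝓝 0, ε < - U.eval (w (2*k+1)) := eventually_lt_nhds (by linarith)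
      filter_upwards [nhdsWithin_le_nhds h3] with ε hε _
      linarith
    · exact Eventually.of_forall fun _ h => absurd h hk
  filter_upwards [hev, self_mem_nhdsWithin] with ε hε hpos
  have hpos : 0 < ε := hpos
  refine cps_splits (d+1) (U + C ε) ?_ ?_ w hw ?_
  · apply hUm.add_of_left
    refine lt_of_le_of_lt degree_C_le ?_
    rw [degree_eq_natDegree hUm.ne_zero, hUd]
    exact_mod_cast Nat.succ_pos d
  · rw [natDegree_add_C, hUd]
  · intro j hj
    rw [eval_add, eval_C]
    have hroot : ∀ i ≤ d, U.eval (u i) = 0 := by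
      intro i hi
      rw [hU, eval_prod]
      exact Finset.prod_eq_zero (Finset.mem_range.mpr (by omega : i < d+1)) (by simp)
    rcases Nat.even_or_odd' j with ⟨k, rfl | rfl⟩
    · rw [Even.neg_one_pow ⟨k, by ring⟩]
      rcases k with _ | k
      · rw [mul_zero, hw0, hroot 0 (by omega)]; simpa
      · rw [show 2 * (k+1) = 2*k+2 by ring, hwe, hroot _ (by omega)]; simpa
    · rw [Odd.neg_one_pow ⟨k, rfl⟩]
      have := hε k (Finset.mem_range.mpr (by omega)) (by omega)
      linarith

lemma cps_sorted (n : ℕ) (M : Multiset ℝ) (hM : M.card = n) :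
    ∃ y : Fin n → ℝ, Monotone y ∧ (Finset.univ : Finset (Fin n)).val.map y = M := by
  obtain ⟨l, rfl⟩ : ∃ l : List ℝ, (l : Multiset ℝ) = M := Quotient.exists_rep M
  obtain rfl : l.length = n := by simpa using hM
  refine ⟨l.get ∘ Tuple.sort l.get, Tuple.monotone_sort l.get, ?_⟩
  have h1 : (Finset.univ : Finset (Fin l.length)).val.map (Tuple.sort l.get) =
      Finset.univ.val := by
    have := congrArg Finset.val (Finset.map_univ_equiv (Tuple.sort l.get))
    simpa using this
  rw [← Multiset.map_map, h1]
  simp [Finset.univ, Fintype.elems]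

open Polynomial in
lemma cps_unique {n : ℕ} (x y : Fin n → ℝ) (hx : Monotone x) (hy : Monotone y)
    (h : ∀ t : ℝ, ∏ i, (t - x i) = ∏ i, (t - y i)) : x = y := by
  have h1 : ∏ i, (X - C (x i)) = ∏ i, (X - C (y i)) := by
    apply Polynomial.funext
    intro t
    simpa [eval_prod] using h t
  have h2 : ∀ z : Fin n → ℝ, (∏ i, (X - C (z i))).roots = Finset.univ.val.map z := by
    intro z
    have := roots_multiset_prod_X_sub_C (Finset.univ.val.map z)
    rw [Multiset.map_map] at this
    exact this
  have h3 : Finset.univ.val.map x = Finset.univ.val.map y := by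
    rw [← h2, ← h2, h1]
  have h4 : (List.ofFn x).Perm (List.ofFn y) := by
    rw [← Multiset.coe_eq_coe]
    simpa [Finset.univ, Fintype.elems, List.ofFn_eq_map] using h3
  apply List.ofFn_injective
  exact List.Perm.eq_of_pairwise' (r := (· ≤ ·)) 
    (List.pairwise_ofFn.mpr fun _ _ h => hx h.le) (List.pairwise_ofFn.mpr fun _ _ h => hy h.le) h4

open Polynomial in
lemma cps_coeff {n : ℕ} (y : Fin n → ℝ) (k : ℕ) (hk : k ≤ n) :
    (∏ i, (X - C (y i))).coeff (n - k) =
      (-1)^k * MvPolynomial.eval y (MvPolynomial.esymm (Fin n) ℝ k) := by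
  have h := Multiset.prod_X_sub_C_coeff (Finset.univ.val.map y) (k := n - k) (by simp)
  rw [Multiset.map_map] at h
  have h2 := MvPolynomial.aeval_esymm_eq_multiset_esymm (Fin n) ℝ k y
  rw [← MvPolynomial.coe_aeval_eq_eval]
  simp only [Multiset.card_map, Finset.card_val, Finset.card_univ, Fintype.card_fin,
    Nat.sub_sub_self hk] at h
  rw [← h2] at h
  exact h

open Polynomial Filter Topology in
lemma cps_main {n d : ℕ} (x y : Fin n → ℝ) (hx : Monotone x) (hy : Monotone y) (hne : x ≠ y)
    (h : ∀ k, 1 ≤ k → k ≤ d → ∑ i, y i ^ k = ∑ i, x i ^ k)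
    (h' : ∑ i, y i ^ (d+1) ≤ ∑ i, x i ^ (d+1)) :
    ∃ κ : ℝ → ℝ, ∀ᶠ ε : ℝ in 𝓝[>] 0, ∃ v : Fin n → ℝ, Monotone v ∧
      (∀ k, 1 ≤ k → k ≤ d → ∑ i, v i ^ k = ∑ i, x i ^ k) ∧
      ∑ i, v i ^ (d+1) < ∑ i, x i ^ (d+1) ∧
      ∀ t, ∏ i, (t - v i) = ∏ i, (t - x i) + ε * κ t := by
  classical
  obtain ⟨s, hs, hs'⟩ := cps_seq x y hx hy hne h h'
  have hslt : ∀ i j, i < j → j ≤ d → s j < s i := by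
    intro i j hij
    induction j, hij using Nat.le_induction with
    | base => intro hj; exact hs' i (by omega)
    | succ j hj ih => intro hjd; exact (hs' j (by omega)).trans (ih (by omega))
  have hinj : Set.InjOn s (Finset.range (d+1) : Set ℕ) := by
    intro i hi j hj hij
    simp only [Finset.coe_range, Set.mem_Iio] at hi hj
    rcases lt_trichotomy i j with h | h | h
    · exact absurd hij (hslt i j h (by omega)).ne'
    · exact h
    · exact absurd hij (hslt j i h (by omega)).ne
  set T : Finset (Fin n) := (Finset.range (d+1)).image s with hT
  have hTc : T.card = d + 1 := by rw [hT, Finset.card_image_of_injOn hinj, Finset.card_range]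
  have hdn : d + 1 ≤ n := by
    rw [← hTc]; simpa using Finset.card_le_univ T
  have hTcc : Tᶜ.card = n - (d+1) := by rw [Finset.card_compl, hTc, Fintype.card_fin]
  -- the values at the chosen indices, extended
  let u : ℕ → ℝ := fun j => if j ≤ d then x (s j) else x (s d) - ((j : ℝ) - d)
  have hu : ∀ j ≤ d, u j = x (s j) := fun j hj => by simp [u, hj]
  have hu' : ∀ j, d ≤ j → u (j+1) < u j := by
    intro j hj
    rcases eq_or_lt_of_le hj with rfl | hj
    · simp [u]
    · have h1 : ¬ j ≤ d := by omega
      have h2 : ¬ j + 1 ≤ d := by omega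
      simp only [u, h1, h2, if_false]
      push_cast
      linarith
  have hev := cps_perturb d u (by
      intro j
      rcases Nat.lt_or_ge (2*j) d with hj | hj
      · rw [hu _ hj, hu _ hj.le]
        have h1 := hs _ hj.le
        have h2 := hs (2*j+1) hj
        rw [Even.neg_one_pow ⟨j, by ring⟩] at h1
        rw [Odd.neg_one_pow ⟨j, by ring⟩] at h2
        have h3 := hy (hs' _ hj).le
        linarith
      · exact hu' _ hj)
    (by
      intro j
      rcases Nat.lt_or_ge (2*j+1) d with hj | hj
      · rw [hu _ hj, hu _ hj.le]
        exact hx (hs' _ hj).le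
      · exact (hu' _ hj).le)
  set K : ℝ[X] := ∏ i ∈ Tᶜ, (X - C (x i)) with hK
  have hKm : K.Monic := monic_prod_X_sub_C _ _
  have hKd : K.natDegree = n - (d+1) := by
    rw [hK, natDegree_finsetProd_X_sub_C_eq_card, hTcc]
  have hU : ∏ j ∈ Finset.range (d+1), (X - C (u j)) = ∏ i ∈ T, (X - C (x i)) := by
    rw [hT, Finset.prod_image hinj]
    refine Finset.prod_congr rfl fun j hj => ?_
    rw [hu j (by have := Finset.mem_range.mp hj; omega)]
  refine ⟨fun t => K.eval t, ?_⟩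
  filter_upwards [hev, self_mem_nhdsWithin] with ε hε hpos
  have hpos : 0 < ε := hpos
  obtain ⟨r, hr⟩ := hε
  obtain ⟨v, hvm, hv⟩ := cps_sorted n (Tᶜ.val.map x + (Finset.range (d+1)).val.map r) (by
    simp only [Multiset.card_add, Multiset.card_map, Finset.card_val, hTcc, Finset.card_range]
    omega)
  have hpoly : ∏ i, (X - C (v i)) = ∏ i, (X - C (x i)) + C ε * K := by
    have e1 : ∏ i, (X - C (v i)) = K * ∏ j ∈ Finset.range (d+1), (X - C (r j)) := by
      have := congrArg (fun M : Multiset ℝ => (M.map fun a => X - C a).prod) hv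
      simp only [Multiset.map_add, Multiset.prod_add, Multiset.map_map] at this
      exact this
    have e2 : ∏ i, (X - C (x i)) = K * ∏ i ∈ T, (X - C (x i)) := by
      rw [mul_comm, hK, Finset.prod_mul_prod_compl]
    rw [e1, e2, ← hr, hU]
    ring
  have hcoe : ∀ k ≤ n, (-1)^k * MvPolynomial.eval v (MvPolynomial.esymm (Fin n) ℝ k) =
      (-1)^k * MvPolynomial.eval x (MvPolynomial.esymm (Fin n) ℝ k) + ε * K.coeff (n - k) := by
    intro k hk
    rw [← cps_coeff v k hk, ← cps_coeff x k hk, hpoly, coeff_add, coeff_C_mul]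
  have hesymm : ∀ k ≤ d, MvPolynomial.eval v (MvPolynomial.esymm (Fin n) ℝ k) =
      MvPolynomial.eval x (MvPolynomial.esymm (Fin n) ℝ k) := by
    intro k hk
    have h1 := hcoe k (by omega)
    rw [coeff_eq_zero_of_natDegree_lt (by omega), mul_zero, add_zero] at h1
    exact mul_left_cancel₀ (pow_ne_zero _ (by norm_num)) h1
  obtain ⟨hp1, hp2⟩ := cps_psum_of_esymm n v x d hesymm
  refine ⟨v, hvm, hp1, ?_, ?_⟩
  · have h1 := hcoe (d+1) hdn
    have h2 : K.coeff (n - (d+1)) = 1 := by rw [← hKd]; exact hKm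
    rw [h2, pow_succ] at h1
    have h3 : 0 < ((d:ℝ) + 1) * ε := by positivity
    have h4 : (-1)^d * ((d:ℝ)+1) * (MvPolynomial.eval v (MvPolynomial.esymm (Fin n) ℝ (d+1)) -
      MvPolynomial.eval x (MvPolynomial.esymm (Fin n) ℝ (d+1))) = -(((d:ℝ) + 1) * ε) := by
      linear_combination (-((d:ℝ)+1)) * h1
    rw [h4] at hp2
    linarith
  · intro t
    have := congrArg (eval t) hpoly
    simpa [eval_prod] using this

open Filter Topology in
lemma cps_near {n d : ℕ} (x y : Fin n → ℝ) (hx : Monotone x) (hy : Monotone y)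
    (hne : x ≠ y)
    (h : ∀ k, 1 ≤ k → k ≤ d → ∑ i, y i ^ k = ∑ i, x i ^ k)
    (h' : ∑ i, y i ^ (d+1) ≤ ∑ i, x i ^ (d+1)) (B : Set (Fin n → ℝ)) (hB : IsCompact B)
    (hBm : ∀ b ∈ B, Monotone b) (hxB : x ∉ B) :
    ∃ v : Fin n → ℝ, Monotone v ∧ (∀ k, 1 ≤ k → k ≤ d → ∑ i, v i ^ k = ∑ i, x i ^ k) ∧
      ∑ i, v i ^ (d+1) < ∑ i, x i ^ (d+1) ∧ v ∉ B := by
  by_contra hcon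
  push Not at hcon
  obtain ⟨κ, hκ⟩ := cps_main x y hx hy hne h h'
  have h1 : ∀ᶠ ε : ℝ in 𝓝[>] 0, ∃ v ∈ B, ∀ t, ∏ i, (t - v i) = ∏ i, (t - x i) + ε * κ t := by
    filter_upwards [hκ] with ε hε
    obtain ⟨v, a, b, c, e⟩ := hε
    exact ⟨v, hcon v a b c, e⟩
  have h2 : Tendsto (fun k : ℕ => 1 / ((k:ℝ) + 1)) atTop (𝓝[>] 0) := by
    rw [tendsto_nhdsWithin_iff]
    exact ⟨tendsto_one_div_add_atTop_nhds_zero_nat, Eventually.of_forall fun k => by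
      simp only [Set.mem_Ioi]; positivity⟩
  obtain ⟨N, hN⟩ := eventually_atTop.mp (h2.eventually h1)
  have h3 : ∀ k : ℕ, ∃ v ∈ B, ∀ t, ∏ i, (t - v i) =
      ∏ i, (t - x i) + 1 / (((k + N : ℕ):ℝ) + 1) * κ t := fun k => hN (k+N) (by omega)
  choose v hvB hv using h3
  obtain ⟨a, haB, φ, hφ, hlim⟩ := hB.tendsto_subseq hvB
  apply hxB
  have : x = a := by
    apply cps_unique x a hx (hBm a haB)
    intro t
    have hc : Continuous fun w : Fin n → ℝ => ∏ i, (t - w i) := by fun_prop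
    have l1 := (hc.tendsto a).comp hlim
    have l2 : Tendsto (fun k : ℕ => ∏ i, (t - x i) + 1 / (((k + N : ℕ):ℝ) + 1) * κ t) atTop
        (𝓝 (∏ i, (t - x i) + 0 * κ t)) := by
      apply Tendsto.const_add
      apply Tendsto.mul_const
      exact (tendsto_add_atTop_iff_nat (f := fun k : ℕ => 1 / ((k:ℝ) + 1)) N).mpr
        tendsto_one_div_add_atTop_nhds_zero_nat
    have l3 := l2.comp hφ.tendsto_atTop
    rw [zero_mul, add_zero] at l3
    refine tendsto_nhds_unique l3 (l1.congr fun k => ?_)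
    simp only [Function.comp]
    exact hv _ t
  rwa [this]

lemma cps_preconn {n d : ℕ} (hd : 2 ≤ d) (c : ℕ → ℝ) :
    IsPreconnected {y : Fin n → ℝ | Monotone y ∧ ∀ k, 1 ≤ k → k ≤ d → ∑ i, y i ^ k = c k} := by
  set F := {y : Fin n → ℝ | Monotone y ∧ ∀ k, 1 ≤ k → k ≤ d → ∑ i, y i ^ k = c k} with hF
  have hclosed : IsClosed F := by
    have e : F = {y | Monotone y} ∩ ⋂ k, ⋂ (_ : 1 ≤ k), ⋂ (_ : k ≤ d),
        {y : Fin n → ℝ | ∑ i, y i ^ k = c k} := by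
      ext y; simp [hF]
    rw [e]
    refine IsClosed.inter isClosed_monotone ?_
    refine isClosed_iInter fun k => isClosed_iInter fun _ => isClosed_iInter fun _ => ?_
    exact isClosed_eq (by fun_prop) continuous_const
  have hcpt : IsCompact F := by
    refine Metric.isCompact_of_isClosed_isBounded hclosed ?_
    refine (Metric.isBounded_closedBall (x := (0 : Fin n → ℝ)) (r := c 2 + 1)).subset ?_
    intro y hy
    have h2 := hy.2 2 (by norm_num) hd
    have hc0 : 0 ≤ c 2 := by rw [← h2]; positivity
    rw [mem_closedBall_zero_iff, pi_norm_le_iff_of_nonneg (by linarith)]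
    intro i
    have h3 : y i ^ 2 ≤ c 2 := by
      rw [← h2]
      exact Finset.single_le_sum (f := fun i => y i ^ 2) (fun i _ => by positivity)
        (Finset.mem_univ i)
    rw [Real.norm_eq_abs, abs_le]
    constructor <;> nlinarith
  have key : ∀ t t' : Set (Fin n → ℝ), IsClosed t' → F ⊆ t ∪ t' → F ∩ (t ∩ t') = ∅ →
      ∀ x ∈ F ∩ t, ∀ y ∈ F ∩ t', (∀ v ∈ F ∩ t, ∑ i, x i ^ (d+1) ≤ ∑ i, v i ^ (d+1)) →
      ∑ i, y i ^ (d+1) ≤ ∑ i, x i ^ (d+1) → False := by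
    intro t t' ht' hsub hdis x hx y hy hmin hle
    have hxt' : x ∉ F ∩ t' := fun h => by
      have : x ∈ F ∩ (t ∩ t') := ⟨hx.1, hx.2, h.2⟩
      rw [hdis] at this; exact this
    obtain ⟨v, a, b, e, g⟩ := cps_near x y hx.1.1 hy.1.1 (fun he => hxt' (he ▸ hy))
      (fun k h1 h2 => by rw [hy.1.2 k h1 h2, hx.1.2 k h1 h2]) hle (F ∩ t') (hcpt.inter_right ht')
      (fun b hb => hb.1.1) hxt'
    have hvF : v ∈ F := ⟨a, fun k h1 h2 => by rw [b k h1 h2, hx.1.2 k h1 h2]⟩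
    rcases hsub hvF with h | h
    · exact absurd e (not_lt.mpr (hmin v ⟨hvF, h⟩))
    · exact g ⟨hvF, h⟩
  rw [isPreconnected_closed_iff]
  intro t t' ht ht' hsub hn hn'
  by_contra hcon
  rw [Set.not_nonempty_iff_eq_empty] at hcon
  have hcont : Continuous fun y : Fin n → ℝ => ∑ i, y i ^ (d+1) := by fun_prop
  obtain ⟨x, hx, hxm⟩ := (hcpt.inter_right ht).exists_isMinOn hn hcont.continuousOn
  obtain ⟨y, hy, hym⟩ := (hcpt.inter_right ht').exists_isMinOn hn' hcont.continuousOn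
  rcases le_total (∑ i, y i ^ (d+1)) (∑ i, x i ^ (d+1)) with h | h
  · exact key t t' ht' hsub hcon x hx y hy (fun v hv => hxm hv) h
  · exact key t' t ht (by rwa [Set.union_comm]) (by rwa [Set.inter_comm t' t]) y hy x hx
      (fun v hv => hym hv) h

/-- If `S ⊆ ℝⁿ` is defined by symmetric polynomial inequalities
`f_1 ≥ 0, …, f_s ≥ 0` of degree at most `d ≤ n`, `x ∈ S ∩ W_c` and `z ∈ W_c`
(where `W_c` is the canonical Weyl chamber of nondecreasing vectors) have the same
power sums `p_1, …, p_d`, then `x` and `z` lie in the same connected component of `S`. -/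
theorem connected_of_equal_powerSums (n d s : ℕ) (hn : 0 < n) (hd : 0 < d) (hs : 0 < s)
    (hdn : d ≤ n) (f : Fin s → MvPolynomial (Fin n) ℝ)
    (hsym : ∀ i, (f i).IsSymmetric) (hdeg : ∀ i, (f i).totalDegree ≤ d)
    (S : Set (Fin n → ℝ)) (hS : S = {x | ∀ i, 0 ≤ MvPolynomial.eval x (f i)})
    (x z : Fin n → ℝ) (hx : x ∈ S) (hxW : Monotone x) (hzW : Monotone z)
    (hpz : ∀ j : ℕ, 1 ≤ j → j ≤ d → ∑ i, z i ^ j = ∑ i, x i ^ j) :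
    z ∈ connectedComponentIn S x := by
  set F := {y : Fin n → ℝ | Monotone y ∧ ∀ k, 1 ≤ k → k ≤ d → ∑ i, y i ^ k = ∑ i, x i ^ k} with hF
  have hxF : x ∈ F := ⟨hxW, fun _ _ _ => rfl⟩
  have hzF : z ∈ F := ⟨hzW, hpz⟩
  have hFS : F ⊆ S := by
    intro y hy
    rw [hS] at hx ⊢
    intro i
    have he := cps_esymm_of_psum n d y x hy.2
    rw [cps_symm_eval n d (f i) (hsym i) (hdeg i) y x (fun k _ hk => he k hk)]
    exact hx i
  have hconn : IsPreconnected F := by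
    rcases Nat.lt_or_ge d 2 with h | h
    · obtain rfl : d = 1 := by omega
      apply Convex.isPreconnected
      intro a ha b hb p q hp hq hpq
      refine ⟨?_, ?_⟩
      · exact (ha.1.const_mul hp).add (hb.1.const_mul hq)
      · intro k h1 h2
        obtain rfl : k = 1 := by omega
        have e1 := ha.2 1 le_rfl le_rfl
        have e2 := hb.2 1 le_rfl le_rfl
        simp only [pow_one] at e1 e2 ⊢
        simp only [Pi.add_apply, Pi.smul_apply, smul_eq_mul]
        rw [Finset.sum_add_distrib, ← Finset.mul_sum, ← Finset.mul_sum, e1, e2, ← add_mul, hpq,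
          one_mul]
    · exact cps_preconn h _
  exact hconn.subset_connectedComponentIn hxF hFS hzF
end

section
/- Let S ⊆ ℝⁿ be a closed, bounded set invariant under the coordinate-permutation action of S_n, such that S_c = S ∩ W_c has finitely many connected components. Let x ∈ S_c and y ∈ S, and let y' ∈ W_c be the vector obtained by sorting the coordinates of y in nondecreasing order. Let 𝒞 be the connected component of S_c containing x, and let G(𝒞) be the subgroup of S_n generated by the adjacent transpositions (i,i+1) for which 𝒞 ∩ {x ∈ ℝⁿ : x_i = x_{i+1}} is nonempty. Then x and y lie in the same connected component of S if and only if: (1) y' lies in 𝒞, and (2) there exists σ ∈ G(𝒞) with σ·y = y'. -/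
/-- The canonical Weyl chamber `W_c = {x : x_1 ≤ ⋯ ≤ x_n}`. -/
def weylChamber (n : ℕ) : Set (Fin n → ℝ) := {x | Monotone x}

/-- The coordinate-permutation action of `S_n` on `ℝⁿ`: `(σ • x) i = x (σ⁻¹ i)`. -/
def permAct {n : ℕ} (σ : Equiv.Perm (Fin n)) (x : Fin n → ℝ) : Fin n → ℝ :=
  fun i => x (σ⁻¹ i)

/-- The `i`-th coordinate index, viewed in `Fin n`. -/
def lowIdx {n : ℕ} (i : Fin (n - 1)) : Fin n := ⟨i.1, by have := i.2; omega⟩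

/-- The `(i+1)`-st coordinate index, viewed in `Fin n`. -/
def highIdx {n : ℕ} (i : Fin (n - 1)) : Fin n := ⟨i.1 + 1, by have := i.2; omega⟩

/-- The wall `{x ∈ ℝⁿ : x_i = x_{i+1}}` of the canonical Weyl chamber. -/
def wall (n : ℕ) (i : Fin (n - 1)) : Set (Fin n → ℝ) :=
  {x | x (lowIdx i) = x (highIdx i)}

open MulAction in
theorem aux_stab {n : ℕ} (c : Fin n → ℝ) (hc : Monotone c) (σ : Equiv.Perm (Fin n))
    (hσ : ∀ i, c (σ i) = c i) :
    σ ∈ Subgroup.closure {τ : Equiv.Perm (Fin n) |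
      ∃ i : Fin (n - 1), τ = Equiv.swap (lowIdx i) (highIdx i) ∧ c ∈ wall n i} := by
  set T : Set (Equiv.Perm (Fin n)) := {τ : Equiv.Perm (Fin n) |
      ∃ i : Fin (n - 1), τ = Equiv.swap (lowIdx i) (highIdx i) ∧ c ∈ wall n i} with hT
  have hne : ∀ i : Fin (n - 1), lowIdx i ≠ highIdx i := by
    intro i h
    have := congrArg Fin.val h
    simp [lowIdx, highIdx] at this
  have hS : ∀ f ∈ T, f.IsSwap := by
    rintro f ⟨i, rfl, -⟩
    exact ⟨_, _, hne i, rfl⟩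
  have key : ∀ (k : ℕ) (a b : Fin n), (b : ℕ) = a + k → c a = c b →
      b ∈ orbit (Subgroup.closure T) a := by
    intro k
    induction k with
    | zero =>
      intro a b h _
      have : b = a := Fin.ext (by omega)
      subst this
      exact mem_orbit_self _
    | succ k ih =>
      intro a b h hab
      let m : Fin n := ⟨a + k, by omega⟩
      have h1 : c a ≤ c m := hc (by simp [m, Fin.le_def])
      have h2 : c m ≤ c b := hc (by simp only [m, Fin.le_def]; omega)
      have ham : c a = c m := le_antisymm h1 (by rw [hab]; exact h2)
      have hm := ih a m rfl ham
      let i : Fin (n - 1) := ⟨a + k, by omega⟩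
      have hl : lowIdx i = m := rfl
      have hh : highIdx i = b := Fin.ext (by simp only [highIdx, i]; omega)
      have hmem : Equiv.swap m b ∈ Subgroup.closure T :=
        Subgroup.subset_closure ⟨i, by rw [hl, hh], by
          change c (lowIdx i) = c (highIdx i)
          rw [hl, hh, ← ham, hab]⟩
      have hb : b ∈ orbit (Subgroup.closure T) m :=
        ⟨⟨_, hmem⟩, by change Equiv.swap m b m = b; simp⟩
      rw [← orbit_eq_iff] at hm hb ⊢
      rw [hb, hm]
  rw [mem_closure_isSwap hS]
  refine ⟨Set.toFinite _, fun j => ?_⟩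
  rcases le_total (j : ℕ) (σ j : ℕ) with h | h
  · exact key (σ j - j) j (σ j) (by omega) (hσ j).symm
  · have := key (j - σ j) (σ j) j (by omega) (hσ j)
    exact mem_orbit_symm.mp this

theorem permAct_mul {n : ℕ} (σ τ : Equiv.Perm (Fin n)) (z : Fin n → ℝ) :
    permAct (σ * τ) z = permAct σ (permAct τ z) := by
  funext i; simp [permAct]

theorem permAct_one {n : ℕ} (z : Fin n → ℝ) : permAct 1 z = z := by
  funext i; simp [permAct]

theorem permAct_inv {n : ℕ} (σ : Equiv.Perm (Fin n)) (z : Fin n → ℝ) :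
    permAct σ⁻¹ (permAct σ z) = z := by
  rw [← permAct_mul, inv_mul_cancel, permAct_one]

theorem permAct_inv2 {n : ℕ} (σ : Equiv.Perm (Fin n)) (z : Fin n → ℝ) :
    permAct σ (permAct σ⁻¹ z) = z := by
  rw [← permAct_mul, mul_inv_cancel, permAct_one]

theorem permAct_cont {n : ℕ} (σ : Equiv.Perm (Fin n)) : Continuous (permAct σ) := by
  unfold permAct; fun_prop

theorem permAct_closed {n : ℕ} (σ : Equiv.Perm (Fin n)) {A : Set (Fin n → ℝ)}
    (hA : IsClosed A) : IsClosed (permAct σ '' A) := by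
  have : permAct σ '' A = permAct σ⁻¹ ⁻¹' A := by
    ext z
    constructor
    · rintro ⟨w, hw, rfl⟩
      simpa [permAct_inv] using hw
    · intro hz
      exact ⟨_, hz, permAct_inv2 σ z⟩
  rw [this]
  exact hA.preimage (permAct_cont _)

theorem permAct_sorted {n : ℕ} (σ : Equiv.Perm (Fin n)) (z : Fin n → ℝ)
    (h1 : Monotone z) (h2 : Monotone (permAct σ z)) : permAct σ z = z :=
  Tuple.unique_monotone (f := z) (σ := σ⁻¹) (τ := 1) h2 h1

theorem weyl_closed (n : ℕ) : IsClosed (weylChamber n) := by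
  have : weylChamber n = ⋂ (i : Fin n) (j : Fin n) (_ : i ≤ j), {x | x i ≤ x j} := by
    ext x; simp [weylChamber, Monotone]
  rw [this]
  refine isClosed_iInter fun i => isClosed_iInter fun j => isClosed_iInter fun _ => ?_
  exact isClosed_le (continuous_apply i) (continuous_apply j)

/-- Let `S ⊆ ℝⁿ` be closed, bounded and invariant under the
coordinate-permutation action of `S_n`, such that `S_c = S ∩ W_c` has finitely many
connected components. Let `x ∈ S_c`, `y ∈ S`, and let `y'` be the sorted version
of `y`. Let `𝒞` be the connected component of `S_c` containing `x` and `G(𝒞)` the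
subgroup generated by the adjacent transpositions whose wall meets `𝒞`. Then `x`
and `y` lie in the same connected component of `S` if and only if `y' ∈ 𝒞` and
some `σ ∈ G(𝒞)` maps `y` to `y'`. -/
theorem symmetric_connectivity_criterion (n : ℕ) (S : Set (Fin n → ℝ))
    (hcl : IsClosed S) (hbd : Bornology.IsBounded S)
    (hsymm : ∀ (σ : Equiv.Perm (Fin n)) (x : Fin n → ℝ), x ∈ S → permAct σ x ∈ S)
    (hfin : {C : Set (Fin n → ℝ) |
      ∃ z ∈ S ∩ weylChamber n, C = connectedComponentIn (S ∩ weylChamber n) z}.Finite)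
    (x : Fin n → ℝ) (hx : x ∈ S ∩ weylChamber n) (y : Fin n → ℝ) (hy : y ∈ S)
    (y' : Fin n → ℝ) (hy'mono : Monotone y') (hy'orb : ∃ τ : Equiv.Perm (Fin n), permAct τ y = y') :
    y ∈ connectedComponentIn S x ↔
      (y' ∈ connectedComponentIn (S ∩ weylChamber n) x ∧
        ∃ σ ∈ Subgroup.closure {τ : Equiv.Perm (Fin n) |
            ∃ i : Fin (n - 1), τ = Equiv.swap (lowIdx i) (highIdx i) ∧
              (connectedComponentIn (S ∩ weylChamber n) x ∩ wall n i).Nonempty},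
          permAct σ y = y') := by
  set Sc := S ∩ weylChamber n with hSc
  have hSccl : IsClosed Sc := hcl.inter (weyl_closed n)
  set C := connectedComponentIn Sc x with hC
  set T : Set (Equiv.Perm (Fin n)) := {τ : Equiv.Perm (Fin n) |
            ∃ i : Fin (n - 1), τ = Equiv.swap (lowIdx i) (highIdx i) ∧
              (C ∩ wall n i).Nonempty} with hT
  have hCS : C ⊆ Sc := connectedComponentIn_subset _ _
  have hxC : x ∈ C := mem_connectedComponentIn hx
  have hcompcl : ∀ z ∈ Sc, IsClosed (connectedComponentIn Sc z) := by
    intro z hz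
    refine isClosed_of_closure_subset ?_
    refine (isPreconnected_connectedComponentIn.closure).subset_connectedComponentIn
      (subset_closure (mem_connectedComponentIn hz)) ?_
    exact closure_minimal (connectedComponentIn_subset _ _) hSccl
  constructor
  · intro hyD
    set K : Set (Fin n → ℝ) := ⋃ g ∈ (Subgroup.closure T : Set (Equiv.Perm (Fin n))),
      permAct g '' C with hK
    have hKcl : IsClosed K :=
      (Set.toFinite _).isClosed_biUnion fun g _ => permAct_closed g (hcompcl x hx)
    set F : Set (Set (Fin n → ℝ)) := {C' | ∃ z ∈ Sc, C' = connectedComponentIn Sc z} with hF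
    set Q : Set (Set (Fin n → ℝ)) :=
      {A ∈ Set.image2 (fun (σ : Equiv.Perm (Fin n)) A => permAct σ '' A) Set.univ F |
        Disjoint A K} with hQ
    have hQfin : Q.Finite := (Set.Finite.image2 _ (Set.toFinite _) hfin).subset (Set.sep_subset _ _)
    have hLcl : IsClosed (⋃₀ Q) := by
      rw [Set.sUnion_eq_biUnion]
      refine Set.Finite.isClosed_biUnion hQfin ?_
      rintro A ⟨⟨σ, -, B, ⟨z, hz, rfl⟩, rfl⟩, -⟩
      exact permAct_closed σ (hcompcl z hz)
    have hcov : S ⊆ K ∪ ⋃₀ Q := by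
      intro z hz
      have hzm : permAct (Tuple.sort z)⁻¹ z ∈ Sc := by
        refine ⟨hsymm _ _ hz, ?_⟩
        have := Tuple.monotone_sort z
        change Monotone fun i => z ((Tuple.sort z)⁻¹⁻¹ i)
        rw [inv_inv]
        exact this
      set σ := Tuple.sort z with hσ
      set w := permAct σ⁻¹ z with hw
      have hzA : z ∈ permAct σ '' connectedComponentIn Sc w :=
        ⟨w, mem_connectedComponentIn hzm, permAct_inv2 σ z⟩
      by_cases hd : Disjoint (permAct σ '' connectedComponentIn Sc w) K
      · exact Or.inr ⟨_, ⟨⟨σ, trivial, _, ⟨w, hzm, rfl⟩, rfl⟩, hd⟩, hzA⟩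
      · left
        rw [Set.not_disjoint_iff] at hd
        obtain ⟨u, ⟨c', hc', rfl⟩, hu⟩ := hd
        simp only [hK, Set.mem_iUnion] at hu
        obtain ⟨g, hg, c, hc, hcc⟩ := hu
        have e1 : permAct (g⁻¹ * σ) c' = c := by
          rw [permAct_mul, ← hcc, permAct_inv]
        have hc'm : Monotone c' := (connectedComponentIn_subset _ _ hc').2
        have hcm : Monotone c := (hCS hc).2
        have e2 : permAct (g⁻¹ * σ) c' = c' := permAct_sorted _ _ hc'm (by rw [e1]; exact hcm)
        have e3 : c = c' := e1.symm.trans e2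
        subst e3
        have hCC : connectedComponentIn Sc w = C := by
          rw [connectedComponentIn_eq hc', ← connectedComponentIn_eq hc]
        have hst : (g⁻¹ * σ) ∈ Subgroup.closure T := by
          refine Subgroup.closure_mono ?_ (aux_stab c hcm (g⁻¹ * σ) ?_)
          · rintro τ ⟨i, h1, h2⟩
            exact ⟨i, h1, c, hc, h2⟩
          · intro i
            have := congrFun e2 ((g⁻¹ * σ) i)
            change c ((g⁻¹ * σ)⁻¹ ((g⁻¹ * σ) i)) = _ at this
            rw [← Equiv.Perm.mul_apply, inv_mul_cancel, Equiv.Perm.one_apply] at this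
            exact this.symm
        have hσG : σ ∈ Subgroup.closure T := by
          have := mul_mem hg hst
          simpa using this
        rw [hCC] at hzA
        exact Set.mem_biUnion hσG hzA
    have hdisj : connectedComponentIn S x ∩ (K ∩ ⋃₀ Q) = ∅ := by
      rw [Set.eq_empty_iff_forall_notMem]
      rintro z ⟨-, hzK, A, ⟨-, hA⟩, hzA⟩
      exact Set.disjoint_left.mp hA hzA hzK
    have hxK : x ∈ K := Set.mem_biUnion (Subgroup.closure T).one_mem ⟨x, hxC, permAct_one x⟩
    have hyK : y ∈ K := by
      rcases (isPreconnected_iff_subset_of_disjoint_closed.mp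
        (isPreconnected_connectedComponentIn (F := S) (x := x))) K (⋃₀ Q) hKcl hLcl
        ((connectedComponentIn_subset _ _).trans hcov) hdisj with h | h
      · exact h hyD
      · obtain ⟨A, ⟨-, hA⟩, hxA⟩ := h (mem_connectedComponentIn hx.1)
        exact absurd hxK (Set.disjoint_left.mp hA hxA)
    simp only [hK, Set.mem_iUnion] at hyK
    obtain ⟨g, hg, c, hc, hcy⟩ := hyK
    obtain ⟨τ, hτ⟩ := hy'orb
    have e1 : permAct (τ * g) c = y' := by rw [permAct_mul, hcy, hτ]
    have e2 : permAct (τ * g) c = c := permAct_sorted _ _ (hCS hc).2 (by rw [e1]; exact hy'mono)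
    have e3 : c = y' := e2.symm.trans e1
    subst e3
    exact ⟨hc, g⁻¹, inv_mem hg, by rw [← hcy, permAct_inv]⟩
  · rintro ⟨hy'C, σ, hσ, hσy⟩
    set D := connectedComponentIn S x with hD
    have hCD : C ⊆ D := connectedComponentIn_mono x Set.inter_subset_left
    have key : ∀ g ∈ Subgroup.closure T, ∀ d, d ∈ D ↔ permAct g d ∈ D := by
      intro g hg
      induction hg using Subgroup.closure_induction with
      | mem g hg =>
        obtain ⟨i, rfl, z, hzC, hzw⟩ := hg
        set s := Equiv.swap (lowIdx i) (highIdx i) with hs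
        have hsz : permAct s z = z := by
          funext j
          have hw : z (lowIdx i) = z (highIdx i) := hzw
          simp only [permAct, hs, Equiv.swap_inv, Equiv.swap_apply_def]
          split_ifs with h1 h2
          · rw [h1, hw]
          · rw [h2, hw]
          · rfl
        have hzD := hCD hzC
        have hsub : permAct s '' D ⊆ D := by
          have hpre : IsPreconnected (permAct s '' D) :=
            isPreconnected_connectedComponentIn.image _ (permAct_cont s).continuousOn
          have := hpre.subset_connectedComponentIn (F := S) (x := z) ⟨z, hzD, hsz⟩ (by
            rintro _ ⟨w, hw, rfl⟩
            exact hsymm _ _ (connectedComponentIn_subset _ _ hw))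
          rwa [← connectedComponentIn_eq hzD] at this
        intro d
        refine ⟨fun h => hsub ⟨d, h, rfl⟩, fun h => ?_⟩
        have := hsub ⟨_, h, rfl⟩
        rwa [← permAct_mul, Equiv.swap_mul_self, permAct_one] at this
      | one => intro d; rw [permAct_one]
      | mul a b _ _ ha hb => intro d; rw [permAct_mul, ← ha, ← hb]
      | inv a _ ha => intro d; rw [ha (permAct a⁻¹ d), permAct_inv2]
    rw [key σ hσ y, hσy]
    exact hCD hy'C
end
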